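/- arXiv:1601.02356 — 2 statements merged into one kernel-verified Lean document; each statement's English description precedes it below -/
import Mathlib

section
/- Let N be a Nijenhuis operator on an n-Lie algebra (g, [·,…,·]) over a field K. Define ωᵢ(x₁,…,xₙ) = [x₁,…,xₙ]_N^i for 1 ≤ i ≤ n−1 and [x₁,…,xₙ]_λ = [x₁,…,xₙ] + Σ_{i=1}^{n−1} λⁱ ωᵢ(x₁,…,xₙ). Then: (1) for every λ ∈ K, [·,…,·]_λ is an n-Lie algebra bracket on g (i.e. ω₁,…,ω_{n−1} generate an (n−1)-order 1-parameter deformation); and (2) this deformation is trivial: for every λ ∈ K, the map T_λ = Id + λN satisfies T_λ[x₁,…,xₙ]_λ = [T_λ x₁,…, T_λ xₙ] for all x₁,…,xₙ ∈ g. -/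
/-!
Formally in a parameter `t`, put `T = 1 + tN` and `[x]_t = ∑ tⁱ ωᵢ(x)`. The recursion defining the
`ωᵢ` says `ω_{j+1} + N ω_j = E_{j+1}`, where `E_j(x)` (`levelSum`) is the sum of the brackets with
`N` inserted in `j` places, and the Nijenhuis condition says that `ω_j = 0` for `j > n`
(`nestedBracket_eq_zero`). Together this is the identity `T [x]_t = [Tx₁,…,Tx_{n+1}]`, whose value
at `t = λ` is the triviality of the deformation.

For the Filippov identity, `1 + λN` need not be invertible for a given `λ ∈ K`, but `1 + tN` is
formally injective. Applying `T` to the defect of the Filippov identity of `[·]_t` gives the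
defect of the identity of the original bracket at the vectors `T xᵢ`, `T yᵢ`, which vanishes.
In terms of coefficients: if `F_k` is the coefficient of `t^k` in the defect, then `F_0 = 0` and
`F_{k+1} + N F_k = 0`, so every `F_k` is zero by induction (`nested_filippov_coeff`), and
evaluating at `t = λ` gives the claim. The coefficient computations rest on splitting `E_j` according
to whether `N` is applied in a chosen slot `l` (`levelSum_update_succ`), with the remaining slots
summed up in `slotSum`, a linear function of the vector in slot `l`.

Alternation of `ωᵢ` reduces to that of `E_j`, where the terms cancel in pairs under the
transposition of two slots carrying equal vectors.
-/


open Finset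

/-- `b` is an `m`-multilinear skew-symmetric (alternating) map. -/
def IsSkewMultilinear (K : Type*) [Field K] {g W : Type*} [AddCommGroup g] [Module K g]
    [AddCommGroup W] [Module K W] {m : ℕ} (b : (Fin m → g) → W) : Prop :=
  (∀ (x : Fin m → g) (i : Fin m) (u v : g),
      b (Function.update x i (u + v)) = b (Function.update x i u) + b (Function.update x i v)) ∧
  (∀ (x : Fin m → g) (i : Fin m) (c : K) (u : g),
      b (Function.update x i (c • u)) = c • b (Function.update x i u)) ∧
  (∀ (x : Fin m → g) (i j : Fin m), i ≠ j → x i = x j → b x = 0)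

/-- The Filippov (fundamental) identity for an `(n+1)`-ary bracket. -/
def IsFilippov {g : Type*} [AddCommGroup g] {n : ℕ} (b : (Fin (n + 1) → g) → g) : Prop :=
  ∀ (x : Fin n → g) (y : Fin (n + 1) → g),
    b (Fin.snoc x (b y)) = ∑ i : Fin (n + 1), b (Function.update y i (b (Fin.snoc x (y i))))

/-- `b` is an `(n+1)`-Lie algebra bracket. -/
def IsNLieBracket (K : Type*) [Field K] {g : Type*} [AddCommGroup g] [Module K g]
    {n : ℕ} (b : (Fin (n + 1) → g) → g) : Prop :=
  IsSkewMultilinear K b ∧ IsFilippov b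

/-- The brackets `[x₁,…,x_m]_N^j` defined inductively from an `m`-ary bracket `b`
and a linear map `N`: `[x]_N^0 = b x` and
`[x]_N^{j+1} = ∑_{|S| = j+1} b(N applied at positions in S) − N ([x]_N^j)`. -/
def nestedBracket {K : Type*} [Field K] {g : Type*} [AddCommGroup g] [Module K g]
    {m : ℕ} (b : (Fin m → g) → g) (N : Module.End K g) : ℕ → (Fin m → g) → g
  | 0 => b
  | j + 1 => fun x =>
      (∑ S ∈ Finset.powersetCard (j + 1) (Finset.univ : Finset (Fin m)),
          b (fun i => if i ∈ S then N (x i) else x i))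
        - N (nestedBracket b N j x)

/-- `N` is a Nijenhuis operator on the `(n+1)`-Lie algebra `(g, b)`:
`[Nx₁,…,Nx_{n+1}] = N([x₁,…,x_{n+1}]_N^n)`. -/
def IsNijenhuis {K : Type*} [Field K] {g : Type*} [AddCommGroup g] [Module K g]
    {n : ℕ} (b : (Fin (n + 1) → g) → g) (N : Module.End K g) : Prop :=
  ∀ x : Fin (n + 1) → g, b (fun i => N (x i)) = N (nestedBracket b N n x)

section Nijenhuis

variable {K : Type*} [Field K] {g : Type*} [AddCommGroup g] [Module K g]

/-- The tuple `x` with `N` applied in the positions belonging to `S`. -/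
def applyOn {m : ℕ} (N : Module.End K g) (S : Finset (Fin m)) (x : Fin m → g) : Fin m → g :=
  fun i => if i ∈ S then N (x i) else x i

/-- The sum `E_j(x)` of all brackets with `N` applied in exactly `j` positions; it is the
coefficient of `t^j` in `b (x + t N x)`. -/
def levelSum {m : ℕ} (b : (Fin m → g) → g) (N : Module.End K g) (j : ℕ) (x : Fin m → g) : g :=
  ∑ S ∈ powersetCard j (univ : Finset (Fin m)), b (applyOn N S x)

/-- The sum of all brackets of `w` with `z` placed in slot `l` and `N` applied in exactly `i`
of the other slots. -/
def slotSum {m : ℕ} (b : (Fin m → g) → g) (N : Module.End K g) (w : Fin m → g) (l : Fin m)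
    (i : ℕ) (z : g) : g :=
  ∑ S ∈ powersetCard i ((univ : Finset (Fin m)).erase l), b (Function.update (applyOn N S w) l z)

/-- A skew-multilinear function as a bundled alternating map. -/
def IsSkewMultilinear.toAlt {m : ℕ} {b : (Fin m → g) → g} (hb : IsSkewMultilinear K b) :
    g [⋀^Fin m]→ₗ[K] g where
  toFun := b
  map_update_add' := by
    intro inst x i u v
    obtain rfl : inst = instDecidableEqFin m := Subsingleton.elim _ _
    exact hb.1 x i u v
  map_update_smul' := by
    intro inst x i c u
    obtain rfl : inst = instDecidableEqFin m := Subsingleton.elim _ _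
    exact hb.2.1 x i c u
  map_eq_zero_of_eq' := fun x i j h hij => hb.2.2 x i j hij h

/-! ### Splitting off one slot -/

lemma applyOn_update_of_notMem {m : ℕ} (N : Module.End K g) (S : Finset (Fin m))
    (w : Fin m → g) (l : Fin m) (z : g) (h : l ∉ S) :
    applyOn N S (Function.update w l z) = Function.update (applyOn N S w) l z := by
  funext i
  by_cases hi : i = l
  · subst hi; simp [applyOn, h]
  · simp [applyOn, hi]

lemma applyOn_insert_update {m : ℕ} (N : Module.End K g) (S : Finset (Fin m))
    (w : Fin m → g) (l : Fin m) (z : g) :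
    applyOn N (insert l S) (Function.update w l z)
      = Function.update (applyOn N S w) l (N z) := by
  funext i
  by_cases hi : i = l
  · subst hi; simp [applyOn]
  · simp [applyOn, hi]

lemma sum_powersetCard_split {m : ℕ} (l : Fin m) (j : ℕ) (f : Finset (Fin m) → g) :
    ∑ S ∈ powersetCard (j + 1) (univ : Finset (Fin m)), f S
      = ∑ S ∈ powersetCard (j + 1) (univ.erase l), f S
        + ∑ S ∈ powersetCard j (univ.erase l), f (insert l S) := by
  have hl : l ∉ (univ : Finset (Fin m)).erase l := notMem_erase l univ
  have hn : ∀ i, ∀ S ∈ powersetCard i ((univ : Finset (Fin m)).erase l), l ∉ S :=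
    fun i S hS h => hl ((mem_powersetCard.1 hS).1 h)
  conv_lhs => rw [← insert_erase (mem_univ l), powersetCard_succ_insert hl]
  rw [sum_union, sum_image]
  · intro S hS R hR h
    have := congrArg (fun s => s.erase l) h
    simpa [erase_insert (hn _ S hS), erase_insert (hn _ R hR)] using this
  · rw [disjoint_left]
    intro S hS hS'
    obtain ⟨R, -, rfl⟩ := mem_image.1 hS'
    exact hn _ _ hS (mem_insert_self l R)

lemma applyOn_empty {m : ℕ} (N : Module.End K g) (x : Fin m → g) : applyOn N ∅ x = x := by
  funext i; simp [applyOn]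

lemma applyOn_univ {m : ℕ} (N : Module.End K g) (x : Fin m → g) :
    applyOn N univ x = fun i => N (x i) := by
  funext i; simp [applyOn]

lemma levelSum_zero {m : ℕ} (b : (Fin m → g) → g) (N : Module.End K g) (x : Fin m → g) :
    levelSum b N 0 x = b x := by
  simp [levelSum, applyOn_empty]

lemma slotSum_zero {m : ℕ} (b : (Fin m → g) → g) (N : Module.End K g) (w : Fin m → g)
    (l : Fin m) (z : g) : slotSum b N w l 0 z = b (Function.update w l z) := by
  simp [slotSum, applyOn_empty]

lemma levelSum_update_succ {m : ℕ} (b : (Fin m → g) → g) (N : Module.End K g) (w : Fin m → g)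
    (l : Fin m) (j : ℕ) (z : g) :
    levelSum b N (j + 1) (Function.update w l z)
      = slotSum b N w l (j + 1) z + slotSum b N w l j (N z) := by
  unfold levelSum slotSum
  rw [sum_powersetCard_split l]
  congr 1
  · refine sum_congr rfl fun S hS => ?_
    rw [applyOn_update_of_notMem]
    exact fun h => notMem_erase l univ ((mem_powersetCard.1 hS).1 h)
  · exact sum_congr rfl fun S _ => by rw [applyOn_insert_update]

lemma slotSum_add {m : ℕ} {b : (Fin m → g) → g} (hb : IsSkewMultilinear K b)
    (N : Module.End K g) (w : Fin m → g) (l : Fin m) (i : ℕ) (u v : g) :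
    slotSum b N w l i (u + v) = slotSum b N w l i u + slotSum b N w l i v := by
  simp only [slotSum, ← sum_add_distrib, hb.1]

lemma slotSum_smul {m : ℕ} {b : (Fin m → g) → g} (hb : IsSkewMultilinear K b)
    (N : Module.End K g) (w : Fin m → g) (l : Fin m) (i : ℕ) (c : K) (u : g) :
    slotSum b N w l i (c • u) = c • slotSum b N w l i u := by
  simp only [slotSum, smul_sum, hb.2.1]

lemma IsSkewMultilinear.update_sum {m : ℕ} {b : (Fin m → g) → g} (hb : IsSkewMultilinear K b)
    {ι : Type*} (s : Finset ι) (f : ι → g) (w : Fin m → g) (l : Fin m) :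
    b (Function.update w l (∑ a ∈ s, f a)) = ∑ a ∈ s, b (Function.update w l (f a)) :=
  map_sum (hb.toAlt.toMultilinearMap.toLinearMap w l) f s

/-! ### Skew-multilinearity of the nested brackets -/

/-- Terms with both or neither of the two equal slots in `S` vanish, and the others cancel in
pairs under the transposition of the two slots. -/
lemma levelSum_skew {m : ℕ} {b : (Fin m → g) → g} (hb : IsSkewMultilinear K b)
    (N : Module.End K g) (j : ℕ) : IsSkewMultilinear K (levelSum b N j) := by
  refine ⟨?_, ?_, ?_⟩
  · intro x i u v
    cases j with
    | zero => simp only [levelSum_zero, hb.1]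
    | succ j =>
      simp only [levelSum_update_succ, map_add, slotSum_add hb]
      abel
  · intro x i c u
    cases j with
    | zero => simp only [levelSum_zero, hb.2.1]
    | succ j => simp only [levelSum_update_succ, map_smul, slotSum_smul hb, smul_add]
  · intro x p q hpq hx
    have hxs : ∀ i, x (Equiv.swap p q i) = x i := by
      intro i
      rcases eq_or_ne i p with rfl | hip
      · simp [hx]
      rcases eq_or_ne i q with rfl | hiq
      · simp [hx]
      rw [Equiv.swap_apply_of_ne_of_ne hip hiq]
    have hmem : ∀ (S : Finset (Fin m)) (i : Fin m),
        i ∈ S.map (Equiv.swap p q).toEmbedding ↔ Equiv.swap p q i ∈ S := by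
      intro S i
      rw [mem_map_equiv, Equiv.symm_swap]
    refine sum_involution (fun S _ => S.map (Equiv.swap p q).toEmbedding) ?_ ?_ ?_ ?_
    · intro S _
      have h : applyOn N (S.map (Equiv.swap p q).toEmbedding) x
          = applyOn N S x ∘ Equiv.swap p q := by
        funext i
        simp only [applyOn, Function.comp, hmem, hxs]
      rw [h]
      have := hb.toAlt.map_swap (applyOn N S x) hpq
      change b _ = - b _ at this
      rw [this, add_neg_cancel]
    · intro S _ hne hS
      apply hne
      refine hb.2.2 _ p q hpq ?_
      have h := hmem S p
      rw [hS, Equiv.swap_apply_left] at h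
      simp only [applyOn, h, hx]
    · intro S hS
      rw [mem_powersetCard] at hS ⊢
      exact ⟨subset_univ _, by rw [card_map]; exact hS.2⟩
    · intro S _
      ext i
      simp

lemma nestedBracket_succ {m : ℕ} (b : (Fin m → g) → g) (N : Module.End K g) (j : ℕ)
    (x : Fin m → g) :
    nestedBracket b N (j + 1) x = levelSum b N (j + 1) x - N (nestedBracket b N j x) := rfl

/-- The coefficient form of `T [x]_t = [Tx]`. -/
lemma nested_add {m : ℕ} (b : (Fin m → g) → g) (N : Module.End K g) (j : ℕ) (x : Fin m → g) :
    nestedBracket b N (j + 1) x + N (nestedBracket b N j x) = levelSum b N (j + 1) x := by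
  rw [nestedBracket_succ, sub_add_cancel]

lemma nestedBracket_skew {m : ℕ} {b : (Fin m → g) → g} (hb : IsSkewMultilinear K b)
    (N : Module.End K g) (j : ℕ) : IsSkewMultilinear K (nestedBracket b N j) := by
  induction j with
  | zero => exact hb
  | succ j ih =>
    have hE := levelSum_skew hb N (j + 1)
    refine ⟨fun x i u v => ?_, fun x i c u => ?_, fun x p q hpq hx => ?_⟩
    · simp only [nestedBracket_succ, hE.1, ih.1, map_add]; abel
    · simp only [nestedBracket_succ, hE.2.1, ih.2.1, map_smul, smul_sub]
    · simp only [nestedBracket_succ, hE.2.2 x p q hpq hx, ih.2.2 x p q hpq hx, map_zero, sub_zero]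

lemma nestedBracket_eq_zero {n : ℕ} {b : (Fin (n + 1) → g) → g} {N : Module.End K g}
    (hN : IsNijenhuis b N) (x : Fin (n + 1) → g) (j : ℕ) (hj : n < j) :
    nestedBracket b N j x = 0 := by
  induction j, hj using Nat.le_induction with
  | base =>
    rw [nestedBracket_succ, ← hN x, sub_eq_zero]
    have h : powersetCard (n + 1) (univ : Finset (Fin (n + 1))) = {univ} := by
      simpa using powersetCard_self (univ : Finset (Fin (n + 1)))
    simp [levelSum, h, applyOn_univ]
  | succ j hj ih =>
    rw [nestedBracket_succ, ih, map_zero, sub_zero, levelSum, powersetCard_eq_empty.2, sum_empty]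
    simp only [card_univ, Fintype.card_fin]
    omega

/-! ### The coefficients of the Filippov identity -/

/-- The `k`-th coefficient of a formal product with terms `f i j`. -/
def convSum (k : ℕ) (f : ℕ → ℕ → g) : g := ∑ p ∈ antidiagonal k, f p.1 p.2

lemma convSum_zero (f : ℕ → ℕ → g) : convSum 0 f = f 0 0 := by simp [convSum]

lemma convSum_succ (k : ℕ) (f : ℕ → ℕ → g) :
    convSum (k + 1) f = f 0 (k + 1) + convSum k (fun i j => f (i + 1) j) := by
  simp [convSum, Finset.Nat.antidiagonal_succ]

lemma convSum_succ' (k : ℕ) (f : ℕ → ℕ → g) :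
    convSum (k + 1) f = f (k + 1) 0 + convSum k (fun i j => f i (j + 1)) := by
  simp [convSum, Finset.Nat.antidiagonal_succ']

lemma convSum_add (k : ℕ) (f h : ℕ → ℕ → g) :
    convSum k (fun i j => f i j + h i j) = convSum k f + convSum k h := by
  simp [convSum, sum_add_distrib]

lemma convSum_swap (k : ℕ) (f : ℕ → ℕ → g) :
    convSum k (fun i j => f j i) = convSum k f :=
  Finset.Nat.sum_antidiagonal_swap (f := fun p : ℕ × ℕ => f p.1 p.2)

lemma map_convSum (N : Module.End K g) (k : ℕ) (f : ℕ → ℕ → g) :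
    N (convSum k f) = convSum k (fun i j => N (f i j)) := by
  simp [convSum]

lemma convSum_sum {ι : Type*} (s : Finset ι) (k : ℕ) (f : ι → ℕ → ℕ → g) :
    convSum k (fun i j => ∑ a ∈ s, f a i j) = ∑ a ∈ s, convSum k (f a) := by
  simp only [convSum]
  exact sum_comm

/-- The coefficient form of `T [w, [y]_t]_t = [T w, [T y]]`, with the inner bracket in slot `l`. -/
lemma convSum_nested_add {m : ℕ} {b : (Fin m → g) → g} (hb : IsSkewMultilinear K b)
    (N : Module.End K g) (w y : Fin m → g) (l : Fin m) (k : ℕ) :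
    convSum (k + 1) (fun i j => nestedBracket b N i (Function.update w l (nestedBracket b N j y)))
      + N (convSum k
          (fun i j => nestedBracket b N i (Function.update w l (nestedBracket b N j y))))
      = convSum (k + 1) (fun i j => slotSum b N w l i (levelSum b N j y)) := by
  set z : ℕ → g := fun j => nestedBracket b N j y with hz
  have hz0 : levelSum b N 0 y = z 0 := levelSum_zero b N y
  have hz1 : ∀ j, levelSum b N (j + 1) y = z (j + 1) + N (z j) := fun j => (nested_add b N j y).symm
  have h1 : ∀ i u, nestedBracket b N (i + 1) (Function.update w l u)
      + N (nestedBracket b N i (Function.update w l u))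
      = slotSum b N w l (i + 1) u + slotSum b N w l i (N u) := fun i u => by
    rw [nested_add, levelSum_update_succ]
  have h0 : ∀ u, nestedBracket b N 0 (Function.update w l u) = slotSum b N w l 0 u := fun u => by
    rw [slotSum_zero]; rfl
  change convSum (k + 1) (fun i j => nestedBracket b N i (Function.update w l (z j)))
      + N (convSum k (fun i j => nestedBracket b N i (Function.update w l (z j)))) = _
  rw [convSum_succ, map_convSum, add_assoc, ← convSum_add, h0]
  simp only [h1]
  rw [convSum_add, ← add_assoc, ← convSum_succ k (fun i j => slotSum b N w l i (z j)),
    convSum_succ', add_assoc, ← convSum_add, convSum_succ', hz0]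
  simp only [hz1, slotSum_add hb]

lemma slotSum_sum {m : ℕ} {b : (Fin m → g) → g} (hb : IsSkewMultilinear K b)
    (N : Module.End K g) (w : Fin m → g) (l : Fin m) (i : ℕ) {ι : Type*} (s : Finset ι)
    (f : ι → g) : slotSum b N w l i (∑ a ∈ s, f a) = ∑ a ∈ s, slotSum b N w l i (f a) := by
  simp only [slotSum, hb.update_sum]
  exact sum_comm

lemma snoc_eq_update {n : ℕ} (x : Fin n → g) (z : g) :
    (Fin.snoc x z : Fin (n + 1) → g)
      = Function.update (Fin.snoc x 0 : Fin (n + 1) → g) (Fin.last n) z := by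
  rw [Fin.update_snoc_last]

/-- The Filippov identity of `b` with `N` inserted at the positions `S` among the `xᵢ` and the
positions `R` among the `yᵢ`. -/
lemma filippov_applyOn {n : ℕ} {b : (Fin (n + 1) → g) → g} (hF : IsFilippov b)
    (N : Module.End K g) (x : Fin n → g) (y : Fin (n + 1) → g) (S R : Finset (Fin (n + 1))) :
    b (Function.update (applyOn N S (Fin.snoc x 0 : Fin (n + 1) → g)) (Fin.last n)
        (b (applyOn N R y)))
      = ∑ l, b (Function.update (applyOn N R y) l
          (b (Function.update (applyOn N S (Fin.snoc x 0 : Fin (n + 1) → g)) (Fin.last n)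
            (applyOn N R y l)))) := by
  have h : ∀ z, Function.update (applyOn N S (Fin.snoc x 0 : Fin (n + 1) → g)) (Fin.last n) z
      = Fin.snoc (fun i : Fin n => if i.castSucc ∈ S then N (x i) else x i) z := by
    intro z
    funext i
    refine Fin.lastCases ?_ (fun i => ?_) i
    · simp
    · simp [applyOn, Fin.castSucc_ne_last]
  simp only [h]
  exact hF _ _

/-- The coefficient form of the Filippov identity of `b` at the vectors `T xᵢ`, `T yᵢ`. -/
lemma filippov_coeff {n : ℕ} {b : (Fin (n + 1) → g) → g} (hb : IsNLieBracket K b)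
    (N : Module.End K g) (x : Fin n → g) (y : Fin (n + 1) → g) (k : ℕ) :
    convSum k (fun i j => slotSum b N (Fin.snoc x 0) (Fin.last n) i (levelSum b N j y))
      = ∑ l, convSum k (fun i j => slotSum b N y l i
          (levelSum b N j (Fin.snoc x (y l)))) := by
  set w : Fin (n + 1) → g := Fin.snoc x 0 with hw
  -- The part of the `l`-th summand where slot `l` of `y` is left out of the choice of `R`;
  -- `z` will be `y l` or `N (y l)`.
  let Q : Fin (n + 1) → ℕ → ℕ → g → g := fun l i j z =>
    ∑ S ∈ powersetCard i (univ.erase (Fin.last n)), ∑ R ∈ powersetCard j (univ.erase l),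
      b (Function.update (applyOn N R y) l
        (b (Function.update (applyOn N S w) (Fin.last n) z)))
  let h : Fin (n + 1) → ℕ → ℕ → g := fun l i j =>
    ∑ S ∈ powersetCard i (univ.erase (Fin.last n)), ∑ R ∈ powersetCard j univ,
      b (Function.update (applyOn N R y) l
        (b (Function.update (applyOn N S w) (Fin.last n) (applyOn N R y l))))
  have hL : ∀ i j, slotSum b N w (Fin.last n) i (levelSum b N j y) = ∑ l, h l i j := by
    intro i j
    simp only [h, slotSum, levelSum, hb.1.update_sum, hw, filippov_applyOn hb.2]
    rw [sum_comm (s := univ)]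
    refine sum_congr rfl fun S _ => ?_
    rw [sum_comm]
  have hh0 : ∀ l i, h l i 0 = Q l i 0 (y l) := by
    intro l i
    simp [h, Q, applyOn_empty]
  have hh1 : ∀ l i j, h l i (j + 1) = Q l i (j + 1) (y l) + Q l i j (N (y l)) := by
    intro l i j
    simp only [h, Q, ← sum_add_distrib]
    refine sum_congr rfl fun S _ => ?_
    rw [sum_powersetCard_split l]
    congr 1
    · refine sum_congr rfl fun R hR => ?_
      have hl : l ∉ R := fun h => notMem_erase l univ ((mem_powersetCard.1 hR).1 h)
      simp [applyOn, hl]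
    · refine sum_congr rfl fun R hR => ?_
      have hl : ∀ v, Function.update (applyOn N (insert l R) y) l v
          = Function.update (applyOn N R y) l v := by
        intro v
        have := applyOn_insert_update N R y l (y l)
        rw [Function.update_eq_self] at this
        rw [this, Function.update_idem]
      rw [hl]
      simp [applyOn]
  have hQ : ∀ l i j z, slotSum b N y l i (slotSum b N w (Fin.last n) j z) = Q l j i z := by
    intro l i j z
    rw [slotSum.eq_1 b N w, slotSum_sum hb.1]
    rfl
  simp only [hL]
  rw [convSum_sum]
  refine sum_congr rfl fun l _ => ?_
  have hE0 : levelSum b N 0 (Fin.snoc x (y l)) = slotSum b N w (Fin.last n) 0 (y l) := by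
    rw [snoc_eq_update, levelSum_zero, slotSum_zero]
  have hE1 : ∀ j, levelSum b N (j + 1) (Fin.snoc x (y l))
      = slotSum b N w (Fin.last n) (j + 1) (y l) + slotSum b N w (Fin.last n) j (N (y l)) := by
    intro j
    rw [snoc_eq_update, levelSum_update_succ]
  cases k with
  | zero => rw [convSum_zero, convSum_zero, hh0, hE0, hQ]
  | succ k =>
    rw [convSum_succ', convSum_succ', hh0, hE0, hQ]
    simp only [hh1, hE1, slotSum_add hb.1, hQ]
    rw [convSum_add, convSum_add, ← add_assoc, ← add_assoc,
      ← convSum_succ' k (fun i j => Q l i j (y l)),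
      ← convSum_succ' k (fun i j => Q l j i (y l)),
      convSum_swap (k + 1) (fun i j => Q l i j (y l)),
      convSum_swap k (fun i j => Q l i j (N (y l)))]

/-- Every coefficient of the Filippov identity of `[·]_t` holds, by the formal injectivity of
`1 + tN`. -/
lemma nested_filippov_coeff {n : ℕ} {b : (Fin (n + 1) → g) → g} (hb : IsNLieBracket K b)
    (N : Module.End K g) (x : Fin n → g) (y : Fin (n + 1) → g) (k : ℕ) :
    convSum k (fun i j => nestedBracket b N i (Fin.snoc x (nestedBracket b N j y)))
      = ∑ l, convSum k (fun i j => nestedBracket b N i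
          (Function.update y l (nestedBracket b N j (Fin.snoc x (y l))))) := by
  induction k with
  | zero =>
    simp only [convSum_zero]
    exact hb.2 x y
  | succ k ih =>
    have h := filippov_coeff hb N x y (k + 1)
    simp only [← convSum_nested_add hb.1, sum_add_distrib, ← map_sum, ← snoc_eq_update] at h
    rw [ih] at h
    exact add_right_cancel h

/-! ### Evaluation at a scalar -/

/-- Products of two polynomials of degree at most `n`, collected by degree. -/
lemma sum_range_eq_convSum (n : ℕ) (lam : K) (f : ℕ → ℕ → g)
    (hf : ∀ i j, n < i ∨ n < j → f i j = 0) :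
    ∑ i ∈ range (n + 1), ∑ j ∈ range (n + 1), lam ^ (i + j) • f i j
      = ∑ k ∈ range (2 * n + 1), lam ^ k • convSum k f := by
  rw [← sum_product', ← sum_fiberwise_of_maps_to
    (s := range (n + 1) ×ˢ range (n + 1)) (t := range (2 * n + 1)) (g := fun p => p.1 + p.2)]
  · refine sum_congr rfl fun k _ => ?_
    rw [convSum, smul_sum]
    refine sum_subset_zero_on_sdiff ?_ ?_ ?_
    · intro p hp
      simpa using (mem_filter.1 hp).2
    · intro p hp
      rw [hf, smul_zero]
      simp only [mem_sdiff, mem_filter, mem_product, mem_range, HasAntidiagonal.mem_antidiagonal]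
        at hp
      omega
    · intro p hp
      rw [(mem_filter.1 hp).2]
  · intro p hp
    simp only [mem_product, mem_range] at hp ⊢
    omega

lemma deformed_eq {m : ℕ} (b : (Fin m → g) → g) (N : Module.End K g) (n : ℕ) (lam : K)
    (x : Fin m → g) :
    b x + ∑ i ∈ Finset.Icc 1 n, lam ^ i • nestedBracket b N i x
      = ∑ i ∈ range (n + 1), lam ^ i • nestedBracket b N i x := by
  rw [range_eq_Ico, sum_eq_sum_Ico_succ_bot (Nat.succ_pos n), pow_zero, one_smul]
  rfl

lemma deformed_skew {m : ℕ} {b : (Fin m → g) → g} (hb : IsSkewMultilinear K b)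
    (N : Module.End K g) (n : ℕ) (lam : K) :
    IsSkewMultilinear K (fun x => ∑ i ∈ range (n + 1), lam ^ i • nestedBracket b N i x) := by
  have hE := nestedBracket_skew hb N
  refine ⟨fun x i u v => ?_, fun x i c u => ?_, fun x p q hpq hx => ?_⟩
  · simp only [(hE _).1, smul_add, sum_add_distrib]
  · simp only [(hE _).2.1, smul_sum]
    exact sum_congr rfl fun j _ => smul_comm _ _ _
  · exact sum_eq_zero fun j _ => by rw [(hE j).2.2 x p q hpq hx, smul_zero]

lemma deformed_comp {n : ℕ} {b : (Fin (n + 1) → g) → g} (hb : IsSkewMultilinear K b)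
    {N : Module.End K g} (hN : IsNijenhuis b N) (lam : K) (w y : Fin (n + 1) → g)
    (l : Fin (n + 1)) :
    ∑ i ∈ range (n + 1), lam ^ i • nestedBracket b N i (Function.update w l
        (∑ j ∈ range (n + 1), lam ^ j • nestedBracket b N j y))
      = ∑ k ∈ range (2 * n + 1), lam ^ k • convSum k
          (fun i j => nestedBracket b N i (Function.update w l (nestedBracket b N j y))) := by
  have hE := nestedBracket_skew hb N
  rw [← sum_range_eq_convSum]
  · refine sum_congr rfl fun i _ => ?_
    rw [(hE i).update_sum, smul_sum]
    refine sum_congr rfl fun j _ => ?_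
    rw [(hE i).2.1, smul_smul, pow_add]
  · rintro i j (hi | hj)
    · exact nestedBracket_eq_zero hN _ i hi
    · rw [nestedBracket_eq_zero hN _ j hj]
      simpa using (hE i).2.1 w l 0 0

lemma deformed_filippov {n : ℕ} {b : (Fin (n + 1) → g) → g} (hb : IsNLieBracket K b)
    {N : Module.End K g} (hN : IsNijenhuis b N) (lam : K) :
    IsFilippov (fun x : Fin (n + 1) → g =>
      ∑ i ∈ range (n + 1), lam ^ i • nestedBracket b N i x) := by
  intro x y
  beta_reduce
  rw [snoc_eq_update, deformed_comp hb.1 hN]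
  simp only [deformed_comp hb.1 hN, ← snoc_eq_update, nested_filippov_coeff hb, smul_sum]
  exact sum_comm

lemma map_add_smul_eq {m : ℕ} {b : (Fin m → g) → g} (hb : IsSkewMultilinear K b)
    (N : Module.End K g) (lam : K) (x : Fin m → g) :
    b (fun j => x j + lam • N (x j)) = ∑ j ∈ range (m + 1), lam ^ j • levelSum b N j x := by
  have h := hb.toAlt.toMultilinearMap.map_add_univ (fun j => lam • N (x j)) x
  have e : (fun j => lam • N (x j)) + x = fun j => x j + lam • N (x j) := by
    funext j; simp [add_comm]
  rw [e] at h
  change b _ = ∑ S : Finset (Fin m), b _ at h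
  rw [h, ← powerset_univ, sum_powerset, card_univ, Fintype.card_fin]
  refine sum_congr rfl fun j _ => ?_
  rw [levelSum, smul_sum]
  refine sum_congr rfl fun S hS => ?_
  have h2 := hb.toAlt.toMultilinearMap.map_piecewise_smul (fun _ => lam) (applyOn N S x) S
  change b _ = _ • b _ at h2
  rw [prod_const, (mem_powersetCard.1 hS).2] at h2
  rw [← h2]
  congr 1
  funext i
  by_cases hi : i ∈ S <;> simp [applyOn, hi]

lemma deformed_trivial {n : ℕ} {b : (Fin (n + 1) → g) → g} (hb : IsSkewMultilinear K b)
    {N : Module.End K g} (hN : IsNijenhuis b N) (lam : K) (x : Fin (n + 1) → g) :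
    (∑ i ∈ range (n + 1), lam ^ i • nestedBracket b N i x)
      + lam • N (∑ i ∈ range (n + 1), lam ^ i • nestedBracket b N i x)
      = b (fun j => x j + lam • N (x j)) := by
  rw [map_add_smul_eq hb, sum_range_succ' (fun j => lam ^ j • levelSum b N j x)]
  simp only [← nested_add, smul_add, sum_add_distrib]
  have h := sum_range_succ' (fun i => lam ^ i • nestedBracket b N i x) (n + 1)
  rw [sum_range_succ, nestedBracket_eq_zero hN x (n + 1) (Nat.lt_succ_self n), smul_zero,
    add_zero] at h
  have h2 : lam • N (∑ i ∈ range (n + 1), lam ^ i • nestedBracket b N i x)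
      = ∑ i ∈ range (n + 1), lam ^ (i + 1) • N (nestedBracket b N i x) := by
    simp only [map_sum, map_smul, smul_sum, smul_smul, pow_succ']
  rw [h2, h, levelSum_zero]
  change _ + lam ^ 0 • b x + _ = _
  abel

end Nijenhuis

/-- If `N` is a Nijenhuis operator on the `(n+1)`-Lie algebra `(g, b)`,
then with `ωᵢ = [·,…,·]_N^i` the brackets `[x]_λ = b x + ∑_{i=1}^{n} λ^i ωᵢ x` are
`(n+1)`-Lie brackets for all `λ ∈ K` (the `ωᵢ` generate a deformation), and this
deformation is trivial: `T_λ = Id + λN` satisfies `T_λ [x₁,…,x_{n+1}]_λ = [T_λ x₁,…,T_λ x_{n+1}]`. -/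
theorem nijenhuis_gives_trivial_deformation
    {K : Type*} [Field K] {g : Type*} [AddCommGroup g] [Module K g]
    {n : ℕ} (hn : 1 ≤ n)
    (b : (Fin (n + 1) → g) → g) (hb : IsNLieBracket K b)
    (N : Module.End K g) (hN : IsNijenhuis b N) :
    (∀ lam : K,
        IsNLieBracket K
          (fun x => b x + ∑ i ∈ Finset.Icc 1 n, lam ^ i • nestedBracket b N i x)) ∧
    (∀ (lam : K) (x : Fin (n + 1) → g),
        (b x + ∑ i ∈ Finset.Icc 1 n, lam ^ i • nestedBracket b N i x)
            + lam • N (b x + ∑ i ∈ Finset.Icc 1 n, lam ^ i • nestedBracket b N i x)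
          = b (fun j => x j + lam • N (x j))) := by
  simp only [deformed_eq]
  exact ⟨fun lam => ⟨deformed_skew hb.1 N n lam, deformed_filippov hb hN lam⟩,
    deformed_trivial hb.1 hN⟩
end

section
/- Let N : g → g be a Nijenhuis operator on an n-Lie algebra (g, [·,…,·]) over a field K. Then for every polynomial P(z) = Σ_{i=0}^{m} cᵢ zⁱ with coefficients cᵢ ∈ K, the operator P(N) = Σ_{i=0}^{m} cᵢ Nⁱ is also a Nijenhuis operator on g. Furthermore, if N is invertible, then for every Laurent polynomial Q(z) = Σ_{i=−m}^{m'} cᵢ zⁱ with coefficients in K, the operator Q(N) (where negative powers of N are powers of N⁻¹) is also a Nijenhuis operator on g. -/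
/-!
Write `E` for the space of `(n+1)`-multilinear maps on `g` with values in `g`. For an operator `M`
let `A i M : E → E` be precomposition with `M` in the `i`-th argument and `A₀ M : E → E`
postcomposition with `M`. Unfolding the recursion for `nestedBracket` shows that `M` is Nijenhuis
exactly when
`∑_S (-M)^(n+1-|S|) b (M applied at the positions in S) = 0`,
which says that `∏ i, (A i M - A₀ M)` annihilates `b` (`isNijenhuis_iff`).

Let `M` range over the image of a commutative algebra `L` under `ρ : L → End g`. Then all the
operators `A i (ρ r)` and `A₀ (ρ r)` commute, so they generate a commutative ring, in which the
product above makes sense. If `r` is a (Laurent) polynomial in `t`, then `A i (ρ t) - A₀ (ρ t)`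
divides `A i (ρ r) - A₀ (ρ r)`, exactly as `X - Y` divides `r(X) - r(Y)`. Multiplying over `i`, the
operator attached to `ρ r` is a multiple of the one attached to `ρ t`, and annihilates `b` as soon
as the latter does (`IsNijenhuis.of_dvd`). Only multilinearity of the bracket enters.
-/

open Finset

section Expansion

variable {K : Type*} [Field K] {g : Type*} [AddCommGroup g] [Module K g]

/-- Closed form of the recursion defining `nestedBracket`. -/
lemma nestedBracket_eq_sum {m : ℕ} (b : (Fin m → g) → g) (M : Module.End K g) (j : ℕ)
    (x : Fin m → g) :
    nestedBracket b M j x = ∑ k ∈ range (j + 1),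
      ∑ S ∈ powersetCard k (univ : Finset (Fin m)),
        ((-M) ^ (j - k)) (b fun i => if i ∈ S then M (x i) else x i) := by
  induction j with
  | zero => simp [nestedBracket]
  | succ j ih =>
    rw [sum_range_succ, nestedBracket]
    beta_reduce
    rw [ih, sub_eq_neg_add]
    congr 1
    · rw [← LinearMap.neg_apply, map_sum]
      refine sum_congr rfl fun k hk => ?_
      rw [map_sum]
      refine sum_congr rfl fun S _ => ?_
      rw [Nat.succ_sub (Nat.lt_succ_iff.mp (mem_range.mp hk)), pow_succ', Module.End.mul_apply]
    · simp

lemma isNijenhuis_iff_sum {n : ℕ} (b : (Fin (n + 1) → g) → g) (M : Module.End K g) :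
    IsNijenhuis b M ↔ ∀ x : Fin (n + 1) → g, ∑ S : Finset (Fin (n + 1)),
      ((-M) ^ (n + 1 - #S)) (b fun i => if i ∈ S then M (x i) else x i) = 0 := by
  refine forall_congr' fun x => ?_
  -- The defining equation says that the next bracket `[x]_M^{n+1}` would vanish.
  have h1 : nestedBracket b M (n + 1) x = b (fun i => M (x i)) - M (nestedBracket b M n x) := by
    have : powersetCard (n + 1) (univ : Finset (Fin (n + 1))) = {univ} := by
      simpa using powersetCard_self (univ : Finset (Fin (n + 1)))
    rw [nestedBracket, this]
    simp
  rw [← sub_eq_zero, ← h1, nestedBracket_eq_sum, ← powerset_univ, sum_powerset]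
  simp only [card_univ, Fintype.card_fin]
  refine Eq.congr (sum_congr rfl fun k _ => sum_congr rfl fun S hS => ?_) rfl
  rw [(mem_powersetCard.mp hS).2]

end Expansion

section Operators

variable {K : Type*} [Field K] {g : Type*} [AddCommGroup g] [Module K g]
  {L : Type*} [CommRing L] [Algebra K L] {m : ℕ}

/-- Multilinear maps `g^m → g`, the module on which the operators act. -/
abbrev MultiEnd (K : Type*) [Field K] (g : Type*) [AddCommGroup g] [Module K g] (m : ℕ) :=
  MultilinearMap K (fun _ : Fin m => g) g

/-- The action of `L` on multilinear maps by precomposition in the `i`-th argument. It is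
multiplicative (and not only anti-multiplicative) because `L` is commutative. -/
def preAction (ρ : L →ₐ[K] Module.End K g) (i : Fin m) : L →ₐ[K] Module.End K (MultiEnd K g m) :=
  AlgHom.ofLinearMap
    { toFun := fun r => MultilinearMap.compLinearMapₗ
        (Function.update (fun _ => LinearMap.id) i (ρ r))
      map_add' := fun r s => by
        rw [map_add]
        exact MultilinearMap.map_update_add MultilinearMap.compLinearMapMultilinear _ i _ _
      map_smul' := fun c r => by
        rw [map_smul]
        exact MultilinearMap.map_update_smul MultilinearMap.compLinearMapMultilinear _ i _ _ }
    (by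
      ext f x
      change f (fun j => Function.update (fun _ => LinearMap.id) i (ρ 1) j (x j)) = f x
      rw [map_one, Module.End.one_eq_id, Function.update_eq_self_iff.mpr rfl]
      rfl)
    (by
      intro r s
      ext f x
      simp only [LinearMap.coe_mk, AddHom.coe_mk, Module.End.mul_apply,
        MultilinearMap.compLinearMapₗ_apply, MultilinearMap.compLinearMap_apply]
      congr 1
      ext j
      rcases eq_or_ne j i with rfl | h
      · rw [mul_comm r s]; simp
      · simp [h])

lemma preAction_apply (ρ : L →ₐ[K] Module.End K g) (i : Fin m) (r : L) (f : MultiEnd K g m)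
    (x : Fin m → g) : preAction ρ i r f x = f (Function.update x i (ρ r (x i))) := by
  change f (fun j => Function.update (fun _ => LinearMap.id) i (ρ r) j (x j)) = _
  congr 1
  ext j
  rcases eq_or_ne j i with rfl | h
  · simp
  · simp [h]

/-- The action of `L` on multilinear maps by postcomposition. -/
def postAction (ρ : L →ₐ[K] Module.End K g) (m : ℕ) : L →ₐ[K] Module.End K (MultiEnd K g m) :=
  AlgHom.ofLinearMap
    { toFun := fun r => (ρ r).compMultilinearMapₗ K
      map_add' := fun r s => by ext; simp
      map_smul' := fun c r => by ext; simp }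
    (by ext; simp) (by intro r s; ext; simp)

lemma postAction_apply (ρ : L →ₐ[K] Module.End K g) (r : L) (f : MultiEnd K g m)
    (x : Fin m → g) : postAction ρ m r f x = ρ r (f x) := rfl

/-- All operators of pre- and postcomposition with elements of `L`. -/
def actionSet (ρ : L →ₐ[K] Module.End K g) (m : ℕ) : Set (Module.End K (MultiEnd K g m)) :=
  (⋃ i, Set.range (preAction ρ i)) ∪ Set.range (postAction ρ m)

lemma actionSet_comm (ρ : L →ₐ[K] Module.End K g) (m : ℕ) :
    ∀ a ∈ actionSet ρ m, ∀ c ∈ actionSet ρ m, a * c = c * a := by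
  have pp : ∀ (i : Fin m) (r s : L),
      preAction ρ i r * postAction ρ m s = postAction ρ m s * preAction ρ i r := by
    intro i r s
    ext f x
    simp [preAction_apply, postAction_apply]
  rintro a (ha | ⟨r, rfl⟩) c (hc | ⟨s, rfl⟩)
  · obtain ⟨i, r, rfl⟩ := Set.mem_iUnion.mp ha
    obtain ⟨j, s, rfl⟩ := Set.mem_iUnion.mp hc
    rcases eq_or_ne i j with rfl | h
    · rw [← map_mul, ← map_mul, mul_comm]
    · ext f x
      simp only [Module.End.mul_apply, preAction_apply, Function.update_of_ne h,
        Function.update_of_ne h.symm]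
      rw [Function.update_comm h]
  · obtain ⟨i, r, rfl⟩ := Set.mem_iUnion.mp ha
    exact pp i r s
  · obtain ⟨i, s, rfl⟩ := Set.mem_iUnion.mp hc
    exact (pp i s r).symm
  · rw [← map_mul, ← map_mul, mul_comm]

variable {C : Type*} [CommRing C] [Algebra K C]

lemma prod_preAction_apply (ρ : L →ₐ[K] Module.End K g)
    (Φ : C →ₐ[K] Module.End K (MultiEnd K g m)) (a : Fin m → L →ₐ[K] C)
    (ha : ∀ i r, Φ (a i r) = preAction ρ i r) (r : L) (S : Finset (Fin m)) (f : MultiEnd K g m)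
    (x : Fin m → g) :
    Φ (∏ i ∈ S, a i r) f x = f fun i => if i ∈ S then ρ r (x i) else x i := by
  induction S using Finset.induction_on generalizing f x with
  | empty => simp
  | insert j S hj ih =>
    rw [prod_insert hj, mul_comm, map_mul, Module.End.mul_apply, ih, ha, preAction_apply]
    congr 1
    ext i
    rcases eq_or_ne i j with rfl | h
    · simp [hj]
    · simp [h]

/-- `ρ r` is Nijenhuis iff `∏ i, (A i r - A₀ r)` annihilates the bracket, the product being taken
in any commutative algebra `C` through which the operators `A i r` and `A₀ r` factor. -/
lemma isNijenhuis_iff {n : ℕ} (B : MultiEnd K g (n + 1)) (ρ : L →ₐ[K] Module.End K g)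
    (Φ : C →ₐ[K] Module.End K (MultiEnd K g (n + 1))) (a : Fin (n + 1) → L →ₐ[K] C)
    (a₀ : L →ₐ[K] C) (ha : ∀ i r, Φ (a i r) = preAction ρ i r)
    (ha₀ : ∀ r, Φ (a₀ r) = postAction ρ (n + 1) r) (r : L) :
    IsNijenhuis B (ρ r) ↔ Φ (∏ i, (a i r - a₀ r)) B = 0 := by
  rw [isNijenhuis_iff_sum, MultilinearMap.ext_iff]
  refine forall_congr' fun x => Eq.congr ?_ rfl
  simp only [sub_eq_add_neg]
  rw [Fintype.prod_add, map_sum, LinearMap.sum_apply, _root_.sum_apply]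
  refine sum_congr rfl fun S _ => ?_
  rw [mul_comm, prod_const, card_compl, Fintype.card_fin, ← map_neg a₀, ← map_pow a₀, map_mul,
    ha₀, Module.End.mul_apply, postAction_apply, prod_preAction_apply ρ Φ a ha, map_pow, map_neg]

end Operators

/-- If `f t - h t ∣ f r - h r` for all pairs of homomorphisms `f`, `h` from `L` to a commutative
algebra, as happens when `r` is a (Laurent) polynomial in `t`, then the Nijenhuis property passes
from `ρ t` to `ρ r`. The divisibility is applied in the algebra generated by all pre- and
postcompositions. -/
theorem IsNijenhuis.of_dvd.{v} {K : Type*} [Field K] {g : Type v} [AddCommGroup g] [Module K g]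
    {L : Type*} [CommRing L] [Algebra K L] {n : ℕ} (B : MultiEnd K g (n + 1))
    (ρ : L →ₐ[K] Module.End K g) (t r : L)
    (hr : ∀ (C : Type v) [CommRing C] [Algebra K C] (f h : L →ₐ[K] C), f t - h t ∣ f r - h r)
    (ht : IsNijenhuis B (ρ t)) : IsNijenhuis B (ρ r) := by
  have hcomm := Algebra.isMulCommutative_adjoin K (actionSet_comm ρ (n + 1))
  let C := Algebra.adjoin K (actionSet ρ (n + 1))
  let _ : CommRing C := { (inferInstance : Ring C) with mul_comm := hcomm.is_comm.comm }
  let a : Fin (n + 1) → L →ₐ[K] C := fun i => (preAction ρ i).codRestrict C fun r =>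
    Algebra.subset_adjoin (Or.inl (Set.mem_iUnion.mpr ⟨i, r, rfl⟩))
  let a₀ : L →ₐ[K] C := (postAction ρ (n + 1)).codRestrict C fun r =>
    Algebra.subset_adjoin (Or.inr ⟨r, rfl⟩)
  have key := isNijenhuis_iff B ρ C.val a a₀ (fun _ _ => rfl) (fun _ => rfl)
  rw [key] at ht ⊢
  obtain ⟨q, hq⟩ : ∏ i, (a i t - a₀ t) ∣ ∏ i, (a i r - a₀ r) :=
    prod_dvd_prod_of_dvd _ _ fun i _ => hr C (a i) a₀
  rw [hq, mul_comm, map_mul, Module.End.mul_apply, ht, map_zero]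

lemma Units.sub_dvd_zpow_sub_zpow {C : Type*} [CommRing C] (a c : Cˣ) (k : ℤ) :
    (a : C) - c ∣ ((a ^ k : Cˣ) : C) - ((c ^ k : Cˣ) : C) := by
  have key : ∀ k : ℕ, (a : C) - c ∣ ((a ^ k : Cˣ) : C) - ((c ^ k : Cˣ) : C) := fun k => by
    simpa using sub_dvd_pow_sub_pow (a : C) c k
  obtain ⟨k, rfl | rfl⟩ := k.eq_nat_or_neg
  · simpa using key k
  · obtain ⟨q, hq⟩ := key k
    -- `a⁻ᵏ - c⁻ᵏ = -(aᵏ - cᵏ) a⁻ᵏ c⁻ᵏ`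
    refine ⟨-q * ((a ^ k)⁻¹ : Cˣ) * ((c ^ k)⁻¹ : Cˣ), ?_⟩
    rw [zpow_neg, zpow_neg, zpow_natCast, zpow_natCast]
    linear_combination (((a ^ k)⁻¹ : Cˣ) * ((c ^ k)⁻¹ : Cˣ) : C) * hq.symm
      - (((a ^ k)⁻¹ : Cˣ) : C) * (c ^ k).mul_inv + (((c ^ k)⁻¹ : Cˣ) : C) * (a ^ k).mul_inv

/-- If `N` is a Nijenhuis operator on the `(n+1)`-Lie algebra `(g, b)`,
then `P(N)` is a Nijenhuis operator for every polynomial `P` with coefficients in `K`;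
and if `N` is invertible (a unit `u` of `Module.End K g`), then every Laurent
polynomial `Q(N) = ∑_{i=-m}^{m'} cᵢ Nⁱ` in `N` is a Nijenhuis operator as well. -/
theorem polynomial_of_nijenhuis_is_nijenhuis
    {K : Type*} [Field K] {g : Type*} [AddCommGroup g] [Module K g]
    {n : ℕ} (b : (Fin (n + 1) → g) → g) (hb : IsNLieBracket K b)
    (N : Module.End K g) (hN : IsNijenhuis b N) :
    (∀ P : Polynomial K, IsNijenhuis b (Polynomial.aeval N P)) ∧
    (∀ u : (Module.End K g)ˣ, (u : Module.End K g) = N →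
      ∀ (m m' : ℕ) (c : ℤ → K),
        IsNijenhuis b
          (∑ i ∈ Finset.Icc (-(m : ℤ)) (m' : ℤ),
            c i • ((u ^ i : (Module.End K g)ˣ) : Module.End K g))) := by
  obtain ⟨⟨hadd, hsmul, -⟩, -⟩ := hb
  let B : MultiEnd K g (n + 1) :=
    { toFun := b
      map_update_add' := fun {inst} x i u v => by
        cases Subsingleton.elim inst (instDecidableEqFin (n + 1))
        exact hadd x i u v
      map_update_smul' := fun {inst} x i c u => by
        cases Subsingleton.elim inst (instDecidableEqFin (n + 1))
        exact hsmul x i c u }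
  refine ⟨fun P => ?_, ?_⟩
  · refine IsNijenhuis.of_dvd B (Polynomial.aeval N) Polynomial.X P ?_ ?_
    · intro C _ _ f h
      have e : ∀ f : Polynomial K →ₐ[K] C,
          f P = (P.map (algebraMap K C)).eval (f Polynomial.X) := fun f => by
        rw [Polynomial.eval_map_algebraMap, Polynomial.aeval_algHom_apply,
          Polynomial.aeval_X_left_apply]
      rw [e f, e h]
      exact Polynomial.sub_dvd_eval_sub _ _ _
    · rw [Polynomial.aeval_X]
      exact hN
  · rintro u rfl m m' c
    -- `K[ℤ] = K[T, T⁻¹]` acts on `g` with `Tᵏ ↦ uᵏ`.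
    let ρ : AddMonoidAlgebra K ℤ →ₐ[K] Module.End K g :=
      AddMonoidAlgebra.lift K (Module.End K g) ℤ ((Units.coeHom _).comp (zpowersHom _ u))
    let T : Multiplicative ℤ →* AddMonoidAlgebra K ℤ := AddMonoidAlgebra.of K ℤ
    have hρ : ∀ k : ℤ, ρ (T (Multiplicative.ofAdd k)) =
        ((u ^ k : (Module.End K g)ˣ) : Module.End K g) := by
      intro k
      exact (AddMonoidAlgebra.lift_of _ _).trans rfl
    have h := IsNijenhuis.of_dvd B ρ (T (Multiplicative.ofAdd 1))
      (∑ i ∈ Finset.Icc (-(m : ℤ)) (m' : ℤ), c i • T (Multiplicative.ofAdd i)) ?_ ?_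
    · simp only [map_sum, map_smul, hρ] at h
      exact h
    · intro C _ _ f h
      rw [map_sum, map_sum, ← sum_sub_distrib]
      refine dvd_sum fun i _ => ?_
      rw [map_smul, map_smul, ← smul_sub]
      refine Dvd.dvd.trans ?_ (Algebra.smul_def (c i) (_ : C) ▸ dvd_mul_left _ _)
      -- `f` sends `Tᵏ` to the `k`-th power of the unit `f T`.
      have e : ∀ (f : AddMonoidAlgebra K ℤ →ₐ[K] C) (k : ℤ), f (T (Multiplicative.ofAdd k)) =
          ((((f : AddMonoidAlgebra K ℤ →* C).comp T).toHomUnits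
            (Multiplicative.ofAdd 1) ^ k : Cˣ) : C) := by
        intro f k
        rw [← map_zpow, ← ofAdd_zsmul]
        simp
      rw [e f i, e h i, e f 1, e h 1, zpow_one, zpow_one]
      exact Units.sub_dvd_zpow_sub_zpow _ _ _
    · rw [hρ, zpow_one]
      exact hN
end
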